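/- arXiv:2601.20515 — 2 statements merged into one kernel-verified Lean document; each statement's English description precedes it below -/
import Mathlib

section
/- For every integer N ≥ 1 there is a constant C > 0 (independent of N) such that for all t with 0 < |t| ≤ 1/N and all x ∈ 𝕋 = ℝ/ℤ, the exponential sum satisfies | ∑_{ξ = −N}^{N} e^{2πi (x ξ + t ξ²)} | ≤ C |t|^{−1/2}. -/
open Complex Finset
open scoped Real

lemma aux_g (φ : ℝ) (h : Real.sin φ ≠ 0) :
    (1 - Complex.exp (2 * φ * I)) * ((1 + I * ((Real.cos φ / Real.sin φ : ℝ) : ℂ)) / 2) = 1 := by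
  have h' : Complex.sin φ ≠ 0 := by
    rw [← Complex.ofReal_sin]; exact_mod_cast h
  have e : Complex.exp (2 * φ * I) = (Complex.cos φ + Complex.sin φ * I) ^ 2 := by
    rw [← Complex.exp_mul_I, ← Complex.exp_nat_mul]; congr 1; push_cast; ring
  rw [e]
  push_cast
  have h2 := Complex.sin_sq_add_cos_sq (φ : ℂ)
  have hI := Complex.I_sq
  field_simp
  generalize Complex.sin φ = s at *
  generalize Complex.cos φ = c at *
  have hc : c ^ 2 = 1 - s ^ 2 := by linear_combination h2
  have hc3 : c ^ 3 = c * (1 - s ^ 2) := by rw [← hc]; ring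
  ring_nf
  have i3 : I ^ 3 = -I := by rw [pow_succ, hI]; ring
  simp only [hI, i3, hc, hc3]
  ring

lemma aux_cot (a b : ℝ) (ha : 0 < a) (hab : a ≤ b) (hb : b < π) :
    Real.cos b / Real.sin b ≤ Real.cos a / Real.sin a := by
  have sa := Real.sin_pos_of_pos_of_lt_pi ha (by linarith)
  have sb := Real.sin_pos_of_pos_of_lt_pi (by linarith) hb
  have sd := Real.sin_nonneg_of_nonneg_of_le_pi (x := b - a) (by linarith) (by linarith)
  rw [Real.sin_sub] at sd
  rw [div_le_div_iff₀ sb sa]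
  linarith

lemma aux_sin (θ d : ℝ) (h0 : 0 < θ) (h1 : θ ≤ d) (h2 : d ≤ 1 - θ) : 2 * θ ≤ Real.sin (π * d) := by
  have hp := Real.pi_pos
  rcases le_total d (1 / 2) with h | h
  · have := Real.mul_le_sin (x := π * d) (by apply mul_nonneg hp.le; linarith) (by nlinarith)
    have e : 2 / π * (π * d) = 2 * d := by field_simp
    linarith
  · have := Real.mul_le_sin (x := π * (1 - d)) (by apply mul_nonneg hp.le; linarith) (by nlinarith)
    have e : 2 / π * (π * (1 - d)) = 2 * (1 - d) := by field_simp
    have e2 : Real.sin (π * (1 - d)) = Real.sin (π * d) := by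
      rw [mul_sub, mul_one, Real.sin_pi_sub]
    linarith

lemma aux_cotbd (θ d : ℝ) (h0 : 0 < θ) (h1 : θ ≤ d) (h2 : d ≤ 1 - θ) :
    |Real.cos (π * d) / Real.sin (π * d)| ≤ 1 / (2 * θ) := by
  have hs := aux_sin θ d h0 h1 h2
  rw [abs_div, abs_of_pos (a := Real.sin _) (by linarith)]
  exact div_le_div₀ zero_le_one (Real.abs_cos_le_one _) (by linarith) hs

lemma kl_aux (u : ℕ → ℂ) (d : ℕ → ℝ) (θ : ℝ) (m : ℕ) (h0 : 0 < θ)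
    (hu : ∀ n, ‖u n‖ = 1) (hd : ∀ n, u (n + 1) = u n * Complex.exp (2 * (π * d n : ℝ) * I))
    (hm : ∀ n, d n ≤ d (n + 1)) (h1 : ∀ n ≤ m, θ ≤ d n) (h2 : ∀ n ≤ m, d n ≤ 1 - θ)
    (c : ℕ → ℝ) (hc : ∀ n, c n = Real.cos (π * d n) / Real.sin (π * d n)) :
    ‖∑ n ∈ range (m + 1), u n + u (m + 1) * ((1 + I * (c m : ℂ)) / 2)‖ ≤
      ‖(1 + I * (c 0 : ℂ)) / 2‖ + (c 0 - c m) / 2 := by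
  have key : ∀ n ≤ m, u n + u (n + 1) * ((1 + I * (c n : ℂ)) / 2) = u n * ((1 + I * (c n : ℂ)) / 2) := by
    intro n hn
    have hs := aux_sin θ (d n) h0 (h1 n hn) (h2 n hn)
    have := aux_g (π * d n) (by linarith)
    rw [← hc] at this
    rw [hd]
    linear_combination (-u n) * this
  induction m with
  | zero =>
    have := key 0 le_rfl
    simp only [zero_add, range_one, sum_singleton, sub_self, zero_div, add_zero] at *
    rw [this, norm_mul, hu, one_mul]
  | succ m ih =>
    have ih := ih (fun n hn => h1 n (by omega)) (fun n hn => h2 n (by omega))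
      (fun n hn => key n (by omega))
    have k := key (m + 1) le_rfl
    have hp := Real.pi_pos
    have a1 := h1 m (by omega)
    have a2 := h2 (m + 1) (by omega)
    have cm : c (m + 1) ≤ c m := by
      rw [hc, hc]
      apply aux_cot
      · apply mul_pos hp; linarith
      · exact mul_le_mul_of_nonneg_left (hm m) hp.le
      · nlinarith
    have e : ∑ n ∈ range (m + 1 + 1), u n + u (m + 1 + 1) * ((1 + I * (c (m + 1) : ℂ)) / 2)
        = (∑ n ∈ range (m + 1), u n + u (m + 1) * ((1 + I * (c m : ℂ)) / 2))
          + u (m + 1) * (I * (((c (m + 1) - c m) / 2 : ℝ) : ℂ)) := by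
      rw [sum_range_succ _ (m + 1)]
      push_cast
      linear_combination k
    rw [e]
    refine (norm_add_le _ _).trans ?_
    rw [norm_mul, hu, norm_mul, Complex.norm_I, Complex.norm_real, Real.norm_eq_abs,
      abs_of_nonpos (by linarith)]
    linarith

lemma kl (u : ℕ → ℂ) (d : ℕ → ℝ) (θ : ℝ) (m : ℕ) (h0 : 0 < θ)
    (hu : ∀ n, ‖u n‖ = 1) (hd : ∀ n, u (n + 1) = u n * Complex.exp (2 * (π * d n : ℝ) * I))
    (hm : ∀ n, d n ≤ d (n + 1)) (h1 : ∀ n < m, θ ≤ d n) (h2 : ∀ n < m, d n ≤ 1 - θ) :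
    ‖∑ n ∈ range m, u n‖ ≤ 3 / (2 * θ) := by
  rcases m with _ | m
  · simp; positivity
  have h1' : ∀ n ≤ m, θ ≤ d n := fun n hn => h1 n (by omega)
  have h2' : ∀ n ≤ m, d n ≤ 1 - θ := fun n hn => h2 n (by omega)
  obtain ⟨c, hc⟩ : ∃ c : ℕ → ℝ, ∀ n, c n = Real.cos (π * d n) / Real.sin (π * d n) := ⟨_, fun _ => rfl⟩
  have H := kl_aux u d θ m h0 hu hd hm h1' h2' c hc
  have cb : ∀ n ≤ m, |c n| ≤ 1 / (2 * θ) := fun n hn => by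
    rw [hc]; exact aux_cotbd θ _ h0 (h1' n hn) (h2' n hn)
  have one : 1 ≤ 1 / (2 * θ) := by
    rw [le_div_iff₀ (by positivity)]
    linarith [h1' 0 (by omega), h2' 0 (by omega)]
  have gb : ∀ n ≤ m, ‖(1 + I * (c n : ℂ)) / 2‖ ≤ 1 / (2 * θ) := fun n hn => by
    rw [norm_div]
    have := norm_add_le (1 : ℂ) (I * (c n : ℂ))
    rw [norm_mul, Complex.norm_I, Complex.norm_real, Real.norm_eq_abs, norm_one] at this
    have := cb n hn
    rw [Complex.norm_ofNat]
    linarith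
  have e : ∑ n ∈ range (m + 1), u n = (∑ n ∈ range (m + 1), u n + u (m + 1) * ((1 + I * (c m : ℂ)) / 2))
     - u (m + 1) * ((1 + I * (c m : ℂ)) / 2) := by ring
  rw [e]
  refine (norm_sub_le _ _).trans ?_
  rw [norm_mul, hu]
  have q1 := gb 0 (by omega)
  have q2 := gb m le_rfl
  have q3 := abs_le.1 (cb 0 (by omega))
  have q4 := abs_le.1 (cb m le_rfl)
  have : 3 / (2 * θ) = 3 * (1 / (2 * θ)) := by ring
  linarith [q3.2, q4.1]

/-- the summand -/
noncomputable def ph (x t : ℝ) (ξ : ℤ) : ℂ :=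
  Complex.exp (2 * Real.pi * I * (x * ξ + t * (ξ : ℝ) ^ 2))

lemma ph_norm (x t : ℝ) (ξ : ℤ) : ‖ph x t ξ‖ = 1 := by
  have : ph x t ξ = Complex.exp ((2 * π * (x * ξ + t * (ξ : ℝ) ^ 2) : ℝ) * I) := by
    unfold ph; congr 1; push_cast; ring
  rw [this, Complex.norm_exp_ofReal_mul_I]

lemma ph_succ (x t : ℝ) (k ξ : ℤ) :
    ph x t (ξ + 1) = ph x t ξ * Complex.exp (2 * (π * (x + t * (2 * ξ + 1) - k) : ℝ) * I) := by
  have : Complex.exp (2 * (π * (x + t * (2 * ξ + 1) - k) : ℝ) * I)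
      = Complex.exp (2 * (π * (x + t * (2 * ξ + 1)) : ℝ) * I) := by
    rw [Complex.exp_eq_exp_iff_exists_int]
    exact ⟨-k, by push_cast; ring⟩
  rw [this]
  unfold ph
  rw [← Complex.exp_add]
  congr 1; push_cast; ring

/-- pieces -/
noncomputable def pc (N : ℕ) (x t p q : ℝ) : Finset ℤ :=
  (Finset.Icc (-(N : ℤ)) N).filter (fun n => p ≤ x + t * (2 * n + 1) ∧ x + t * (2 * n + 1) < q)

lemma pc_eq (N : ℕ) (x t p q : ℝ) (ht : 0 < t) : ∃ a : ℤ, ∃ m : ℕ, 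
    pc N x t p q = Finset.Ico a (a + m) := by
  have : pc N x t p q = Finset.Ico (max (-(N : ℤ)) ⌈(p - x - t) / (2 * t)⌉)
      (min ((N : ℤ) + 1) ⌈(q - x - t) / (2 * t)⌉) := by
    ext n
    unfold pc
    simp only [mem_filter, Finset.mem_Icc, Finset.mem_Ico, max_le_iff, lt_min_iff, Int.ceil_le, Int.lt_ceil,
      Int.lt_add_one_iff]
    rw [div_le_iff₀ (by positivity), lt_div_iff₀ (by positivity)]
    constructor
    · rintro ⟨⟨h1, h2⟩, h3, h4⟩
      exact ⟨⟨h1, by linarith⟩, h2, by linarith⟩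
    · rintro ⟨⟨h1, h3⟩, h2, h4⟩
      exact ⟨⟨h1, h2⟩, by linarith, by linarith⟩
  rw [this]
  generalize max (-(N : ℤ)) _ = a
  generalize min ((N : ℤ) + 1) _ = b
  refine ⟨a, (b - a).toNat, ?_⟩
  ext n; simp only [Finset.mem_Ico]; omega

lemma sum_small (N : ℕ) (x t p q : ℝ) (ht : 0 < t) (hpq : p ≤ q) :
    ‖∑ n ∈ pc N x t p q, ph x t n‖ ≤ (q - p) / (2 * t) + 1 := by
  refine (norm_sum_le _ _).trans ?_
  simp only [ph_norm, sum_const, nsmul_eq_mul, mul_one]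
  obtain ⟨a, m, h⟩ := pc_eq N x t p q ht
  have hmem : ∀ n, n ∈ Finset.Ico a (a + m) → p ≤ x + t * (2 * n + 1) ∧ x + t * (2 * n + 1) < q := by
    intro n hn; rw [← h] at hn; exact (mem_filter.1 hn).2
  rw [h, Int.card_Ico]
  have : (a + m - a).toNat = m := by omega
  rw [this]
  rcases m with _ | m
  · have : 0 ≤ (q - p) / (2 * t) := div_nonneg (by linarith) (by linarith)
    push_cast; linarith
  · have h1 := (hmem a (by simp only [Finset.mem_Ico]; omega)).1
    have h2 := (hmem (a + m) (by simp only [Finset.mem_Ico]; omega)).2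
    push_cast at *
    have : (m : ℝ) ≤ (q - p) / (2 * t) := by
      rw [le_div_iff₀ (by positivity)]; linarith
    linarith

lemma sum_mid (N : ℕ) (x t θ : ℝ) (k : ℤ) (ht : 0 < t) (hθ : 0 < θ) :
    ‖∑ n ∈ pc N x t (k + θ) (k + 1 - θ), ph x t n‖ ≤ 3 / (2 * θ) := by
  obtain ⟨a, m, h⟩ := pc_eq N x t (k + θ) (k + 1 - θ) ht
  have hmem : ∀ n, n ∈ Finset.Ico a (a + m) → k + θ ≤ x + t * (2 * n + 1) ∧ x + t * (2 * n + 1) < k + 1 - θ := by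
    intro n hn; rw [← h] at hn; exact (mem_filter.1 hn).2
  have e : ∑ n ∈ Finset.Ico a (a + m), ph x t n = ∑ i ∈ range m, ph x t (a + i) := by
    symm
    apply Finset.sum_bij (fun (i : ℕ) _ => a + (i : ℤ))
    · intro i hi; simp only [Finset.mem_range, Finset.mem_Ico] at *; omega
    · intro i _ j _ hij; simpa using hij
    · intro b hb
      simp only [Finset.mem_Ico] at hb
      exact ⟨(b - a).toNat, by simp only [Finset.mem_range]; omega, by omega⟩
    · intro i _; rfl
  rw [h, e]
  apply kl (fun i => ph x t (a + i)) (fun i => x + t * (2 * ((a + i : ℤ) : ℝ) + 1) - k) θ m hθ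
  · intro n; exact ph_norm _ _ _
  · intro n
    have := ph_succ x t k (a + n)
    rw [← this]; congr 1; push_cast; ring
  · intro n; push_cast; nlinarith
  · intro n hn
    have := (hmem (a + n) (by simp only [Finset.mem_Ico]; omega)).1
    linarith
  · intro n hn
    have := (hmem (a + n) (by simp only [Finset.mem_Ico]; omega)).2
    linarith

lemma pc_split (N : ℕ) (x t p q r : ℝ) (h1 : p ≤ q) (h2 : q ≤ r) :
    ∑ n ∈ pc N x t p r, ph x t n = ∑ n ∈ pc N x t p q, ph x t n + ∑ n ∈ pc N x t q r, ph x t n := by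
  rw [← Finset.sum_union]
  · congr 1
    ext n
    simp only [pc, mem_union, mem_filter]
    constructor
    · rintro ⟨h, h3, h4⟩
      rcases lt_or_ge (x + t * (2 * n + 1)) q with h5 | h5
      · exact Or.inl ⟨h, h3, h5⟩
      · exact Or.inr ⟨h, h5, h4⟩
    · rintro (⟨h, h3, h4⟩ | ⟨h, h3, h4⟩)
      · exact ⟨h, h3, by linarith⟩
      · exact ⟨h, by linarith, h4⟩
  · rw [Finset.disjoint_left]
    intro n hn hn'
    have a := (mem_filter.1 hn).2.2
    have b := (mem_filter.1 hn').2.1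
    linarith

lemma sum_unit (N : ℕ) (x s : ℝ) (k : ℤ) (hs : 0 < s) (hs1 : s ≤ 1) :
    ‖∑ n ∈ pc N x (s ^ 2) k (k + 1), ph x (s ^ 2) n‖ ≤ 6 / s := by
  have ht : 0 < s ^ 2 := by positivity
  rw [pc_split N x (s ^ 2) k (k + s / 2) (k + 1) (by linarith) (by linarith),
    pc_split N x (s ^ 2) (k + s / 2) (k + 1 - s / 2) (k + 1) (by linarith) (by linarith)]
  have A := sum_small N x (s ^ 2) k (k + s / 2) ht (by linarith)
  have B := sum_mid N x (s ^ 2) (s / 2) k ht (by linarith)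
  have C := sum_small N x (s ^ 2) (k + 1 - s / 2) (k + 1) ht (by linarith)
  have e1 : (k + s / 2 - k) / (2 * s ^ 2) = (1 / 4) * (1 / s) := by field_simp; ring
  have e2 : ((k : ℝ) + 1 - (k + 1 - s / 2)) / (2 * s ^ 2) = (1 / 4) * (1 / s) := by field_simp; ring
  have e3 : 3 / (2 * (s / 2)) = 3 * (1 / s) := by field_simp
  have e4 : 6 / s = 6 * (1 / s) := by ring
  have : 1 ≤ 1 / s := by rw [le_div_iff₀ hs]; linarith
  rw [e1] at A
  rw [e2] at C
  rw [e3] at B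
  rw [e4]
  refine (norm_add_le _ _).trans ?_
  have := norm_add_le (∑ n ∈ pc N x (s ^ 2) (k + s / 2) (k + 1 - s / 2), ph x (s ^ 2) n)
    (∑ n ∈ pc N x (s ^ 2) (k + 1 - s / 2) (k + 1), ph x (s ^ 2) n)
  linarith

lemma sum_multi (N : ℕ) (x s : ℝ) (k : ℤ) (hs : 0 < s) (hs1 : s ≤ 1) (j : ℕ) :
    ‖∑ n ∈ pc N x (s ^ 2) k (k + j), ph x (s ^ 2) n‖ ≤ j * (6 / s) := by
  induction j with
  | zero =>
    have : pc N x (s ^ 2) k (k + (0 : ℕ)) = ∅ := by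
      apply Finset.eq_empty_of_forall_notMem
      intro n hn
      have := (mem_filter.1 hn).2
      push_cast at this
      linarith [this.1, this.2]
    rw [this]; simp
  | succ j ih =>
    rw [pc_split N x (s ^ 2) k (k + j) _ (by simp) (by push_cast; linarith)]
    have := sum_unit N x s (k + j) hs hs1
    refine (norm_add_le _ _).trans ?_
    push_cast at *
    rw [← add_assoc]
    linarith

lemma main_pos (N : ℕ) (hN : 1 ≤ N) (t : ℝ) (ht : 0 < t) (htN : t ≤ 1 / N) (x : ℝ) :
    ‖∑ ξ ∈ Finset.Icc (-(N : ℤ)) (N : ℤ), ph x t ξ‖ ≤ 30 * t ^ (-(1 / 2) : ℝ) := by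
  have hN' : (1 : ℝ) ≤ N := by exact_mod_cast hN
  have htN' : t * N ≤ 1 := by rwa [le_div_iff₀ (by linarith)] at htN
  have e : t ^ (-(1 / 2) : ℝ) = 1 / √t := by
    rw [Real.rpow_neg ht.le, Real.sqrt_eq_rpow, one_div, one_div]
  rw [e]
  have hs : 0 < √t := Real.sqrt_pos.2 ht
  have hs1 : √t ≤ 1 := by
    rw [Real.sqrt_le_one]
    nlinarith
  have hst : √t ^ 2 = t := Real.sq_sqrt ht.le
  have H := sum_multi N x (√t) ⌊x + t * (1 - 2 * N)⌋ hs hs1 5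
  rw [hst] at H
  have : pc N x t ⌊x + t * (1 - 2 * N)⌋ (⌊x + t * (1 - 2 * N)⌋ + (5 : ℕ)) = Finset.Icc (-(N : ℤ)) (N : ℤ) := by
    apply Finset.filter_true_of_mem
    intro n hn
    rw [Finset.mem_Icc] at hn
    have h1 : -(N : ℝ) ≤ n := by exact_mod_cast hn.1
    have h2 : (n : ℝ) ≤ N := by exact_mod_cast hn.2
    have f1 := Int.floor_le (x + t * (1 - 2 * N))
    have f2 := Int.lt_floor_add_one (x + t * (1 - 2 * N))
    push_cast
    constructor <;> nlinarith
  rw [this] at H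
  refine H.trans (le_of_eq ?_)
  push_cast; ring

/-- One-dimensional dispersive (Weyl sum) estimate for the periodic Schrödinger
kernel: there is a constant `C > 0`, independent of `N`, such that for every
`N ≥ 1`, every `t` with `0 < |t| ≤ 1/N`, and every `x ∈ 𝕋 = ℝ/ℤ` (represented
by a real number, the sum being `1`-periodic in `x`),
`|∑_{ξ=-N}^{N} e^{2πi(xξ + tξ²)}| ≤ C |t|^{-1/2}`. -/
theorem torus_dispersive_estimate_1d :
    ∃ C : ℝ, 0 < C ∧ ∀ N : ℕ, 1 ≤ N → ∀ t : ℝ, t ≠ 0 → |t| ≤ 1 / N → ∀ x : ℝ,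
      ‖∑ ξ ∈ Finset.Icc (-(N : ℤ)) (N : ℤ),
          Complex.exp (2 * Real.pi * I * (x * ξ + t * (ξ : ℝ) ^ 2))‖ ≤
        C * |t| ^ (-(1 / 2) : ℝ) := by
  refine ⟨30, by norm_num, ?_⟩
  intro N hN t ht htN x
  rcases lt_or_gt_of_ne ht with h | h
  · rw [abs_of_neg h] at *
    have H := main_pos N hN (-t) (by linarith) htN (-x)
    rw [← RCLike.norm_conj, map_sum] at H
    refine le_trans (le_of_eq ?_) H
    congr 1
    apply Finset.sum_congr rfl
    intro ξ _
    unfold ph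
    rw [← Complex.exp_conj]
    congr 1
    simp only [map_mul, map_add, map_pow, Complex.conj_ofReal, Complex.conj_I, map_ofNat, map_intCast]
    push_cast; ring
  · rw [abs_of_pos h] at *
    exact main_pos N hN t h htN x
end

section
/- (Gaussian averaging of periodic functions) For every continuous 1-periodic function g on ℝ^d, lim_{ε→0} ε^{d/2} ∫_{ℝ^d} g(x) e^{−επ|x|²} dx = ∫_{[0,1]^d} g(x) dx. -/
open MeasureTheory Filter
open scoped Real Topology

namespace GaussAvg

/-- The Gaussian with parameter `b`. -/
noncomputable def gam (d : ℕ) (b : ℝ) (x : Fin d → ℝ) : ℝ := Real.exp (-b * ∑ i, x i ^ 2)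

lemma gam_eq (d : ℕ) (b : ℝ) : gam d b = fun x => ∏ i, Real.exp (-b * x i ^ 2) := by
  funext x
  rw [gam, Finset.mul_sum, Real.exp_sum]

lemma gam_integrable (d : ℕ) {b : ℝ} (hb : 0 < b) : Integrable (gam d b) := by
  rw [gam_eq]
  exact Integrable.fintype_prod (f := fun (_ : Fin d) (x : ℝ) => Real.exp (-b * x ^ 2))
    (fun _ => integrable_exp_neg_mul_sq hb)

lemma gam_integral (d : ℕ) : ∫ x, gam d π x = 1 := by
  rw [gam_eq, integral_fintype_prod_volume_eq_pow (fun x : ℝ => Real.exp (-π * x ^ 2)),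
    integral_gaussian, div_self Real.pi_ne_zero]
  simp

lemma gam_continuous (d : ℕ) (b : ℝ) : Continuous (gam d b) := by
  unfold gam
  fun_prop

lemma gam_nonneg (d : ℕ) (b : ℝ) (x) : 0 ≤ gam d b x := (Real.exp_pos _).le

lemma bounded (d : ℕ) (g : (Fin d → ℝ) → ℝ) (hg : Continuous g)
    (hper : ∀ x : Fin d → ℝ, ∀ v : Fin d → ℤ, g (x + fun i => (v i : ℝ)) = g x) :
    ∃ M, ∀ x, ‖g x‖ ≤ M := by
  obtain ⟨M, hM⟩ := (isCompact_Icc (a := (0 : Fin d → ℝ)) (b := 1)).exists_bound_of_continuousOn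
    hg.continuousOn
  refine ⟨M, fun x => ?_⟩
  have h := hper (fun i => Int.fract (x i)) (fun i => ⌊x i⌋)
  have h2 : ((fun i => Int.fract (x i)) + fun i => ((⌊x i⌋ : ℤ) : ℝ)) = x := by
    funext i
    simp
  rw [h2] at h
  rw [h]
  exact hM _ ⟨fun i => Int.fract_nonneg _, fun i => (Int.fract_lt_one _).le⟩

lemma cube_shift (d : ℕ) (g : (Fin d → ℝ) → ℝ)
    (hper : ∀ x : Fin d → ℝ, ∀ v : Fin d → ℤ, g (x + fun i => (v i : ℝ)) = g x)
    (a : Fin d → ℝ) :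
    ∫ t in Set.Icc (0 : Fin d → ℝ) 1, g (a + t) = ∫ t in Set.Icc (0 : Fin d → ℝ) 1, g t := by
  have hfd := ZSpan.isAddFundamentalDomain' (Pi.basisFun ℝ (Fin d)) volume
  have hfa := hfd.vadd_of_comm a
  have hae : (ZSpan.fundamentalDomain (Pi.basisFun ℝ (Fin d))) =ᵐ[volume]
      Set.Icc (0 : Fin d → ℝ) 1 := by
    rw [ZSpan.fundamentalDomain_pi_basisFun]
    exact Measure.univ_pi_Ico_ae_eq_Icc
  have hinv : ∀ (v : (Submodule.span ℤ (Set.range (Pi.basisFun ℝ (Fin d)))).toAddSubgroup)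
      (x : Fin d → ℝ), g (v +ᵥ x) = g x := by
    rintro ⟨v, hv⟩ x
    have hv' : v ∈ Submodule.span ℤ (Set.range (Pi.basisFun ℝ (Fin d))) := hv
    rw [(Pi.basisFun ℝ (Fin d)).mem_span_iff_repr_mem ℤ] at hv'
    choose w hw using hv'
    have : v = fun i => (w i : ℝ) := by
      funext i
      simpa using (hw i).symm
    have h2 := hper x w
    rw [← this, add_comm] at h2
    exact h2
  have hcount : Countable
      (Submodule.span ℤ (Set.range (Pi.basisFun ℝ (Fin d)))).toAddSubgroup :=
    inferInstanceAs (Countable (Submodule.span ℤ (Set.range (Pi.basisFun ℝ (Fin d)))))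
  have key := hfa.setIntegral_eq hfd hinv
  rw [← setIntegral_congr_set hae, ← setIntegral_congr_set hae, ← key]
  exact ((measurePreserving_vadd a volume).setIntegral_image_emb
    (measurableEmbedding_const_vadd a) g _).symm

lemma gam_shift_bound (d : ℕ) {s : ℝ} (hs : 0 ≤ s) (hs1 : s ≤ 1) {t y : Fin d → ℝ}
    (ht : t ∈ Set.Icc (0 : Fin d → ℝ) 1) :
    gam d π (y + s • t) ≤ Real.exp (π * d) * gam d (π / 2) y := by
  unfold gam
  rw [← Real.exp_add, Real.exp_le_exp]
  have h : ∑ i, (y i ^ 2 / 2) ≤ ∑ i, ((y + s • t) i ^ 2 + 1) := by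
    refine Finset.sum_le_sum fun i _ => ?_
    have h0 : 0 ≤ t i := ht.1 i
    have h1 : t i ≤ 1 := ht.2 i
    have h2 : 0 ≤ s * t i := mul_nonneg hs h0
    have h3 : s * t i ≤ 1 := mul_le_one₀ hs1 h0 h1
    simp only [Pi.add_apply, Pi.smul_apply, smul_eq_mul]
    nlinarith [sq_nonneg (y i + 2 * (s * t i))]
  rw [Finset.sum_add_distrib, ← Finset.sum_div] at h
  simp only [Finset.sum_const, Finset.card_univ, Fintype.card_fin, nsmul_eq_mul, mul_one] at h
  nlinarith [mul_le_mul_of_nonneg_left h Real.pi_pos.le]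

end GaussAvg

open GaussAvg in
/-- Gaussian averaging of periodic functions: for every continuous `1`-periodic
(i.e. `ℤ^d`-periodic) function `g` on `ℝ^d`,
`lim_{ε→0⁺} ε^{d/2} ∫_{ℝ^d} g(x) e^{-επ|x|²} dx = ∫_{[0,1]^d} g(x) dx`. -/
theorem gaussian_average_periodic (d : ℕ) (g : (Fin d → ℝ) → ℝ)
    (hg : Continuous g)
    (hper : ∀ x : Fin d → ℝ, ∀ v : Fin d → ℤ, g (x + fun i => (v i : ℝ)) = g x) :
    Tendsto
      (fun ε : ℝ =>
        ε ^ ((d : ℝ) / 2) * ∫ x : Fin d → ℝ, g x * Real.exp (-ε * Real.pi * ∑ i, x i ^ 2))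
      (𝓝[>] 0)
      (𝓝 (∫ x in Set.Icc (0 : Fin d → ℝ) 1, g x)) := by
  obtain ⟨M, hM⟩ := bounded d g hg hper
  have hM0 : 0 ≤ M := (norm_nonneg _).trans (hM 0)
  set Q : Set (Fin d → ℝ) := Set.Icc 0 1 with hQ
  have hQm : MeasurableSet Q := measurableSet_Icc
  have hQv : volume Q = 1 := by
    rw [hQ, Real.volume_Icc_pi]
    simp
  have hprob : IsProbabilityMeasure (volume.restrict Q) := ⟨by simp [hQv]⟩
  set μ : Measure ((Fin d → ℝ) × (Fin d → ℝ)) := (volume.restrict Q).prod volume with hμ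
  have hmem : ∀ᵐ p ∂μ, p.1 ∈ Q :=
    Measure.quasiMeasurePreserving_fst.ae (ae_restrict_mem hQm)
  let B : (Fin d → ℝ) × (Fin d → ℝ) → ℝ := fun p => Real.exp (π * d) * gam d (π / 2) p.2
  have hB : Integrable B μ :=
    ((gam_integrable d (by positivity : 0 < π / 2)).comp_snd _).const_mul _
  have hgc := gam_continuous d π
  have hcont : ∀ s r : ℝ, Continuous fun p : (Fin d → ℝ) × (Fin d → ℝ) =>
      g (s⁻¹ • p.2 + p.1) * gam d π (p.2 + r • p.1) := by
    intro s r
    fun_prop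
  have hbd : ∀ s r : ℝ, 0 ≤ r → r ≤ 1 → ∀ᵐ p ∂μ,
      ‖g (s⁻¹ • p.2 + p.1) * gam d π (p.2 + r • p.1)‖ ≤ M * B p := by
    intro s r hr hr1
    filter_upwards [hmem] with p hp
    rw [norm_mul, Real.norm_of_nonneg (gam_nonneg _ _ _)]
    exact mul_le_mul (hM _) (gam_shift_bound d hr hr1 hp) (gam_nonneg _ _ _) hM0
  have hinteg : ∀ s r : ℝ, 0 ≤ r → r ≤ 1 → Integrable (fun p : (Fin d → ℝ) × (Fin d → ℝ) =>
      g (s⁻¹ • p.2 + p.1) * gam d π (p.2 + r • p.1)) μ := fun s r hr hr1 =>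
    Integrable.mono' (hB.const_mul M) (hcont s r).aestronglyMeasurable (hbd s r hr hr1)
  -- the mean as an integral over the product
  have hmean : ∀ s : ℝ, ∫ p, g (s⁻¹ • p.2 + p.1) * gam d π (p.2 + (0 : ℝ) • p.1) ∂μ
      = ∫ x in Q, g x := by
    intro s
    rw [integral_prod_symm _ (hinteg s 0 le_rfl zero_le_one)]
    simp only [zero_smul, add_zero]
    simp_rw [integral_mul_const, hQ, cube_shift d g hper]
    rw [integral_const_mul, gam_integral, mul_one]
  -- the Gaussian average as an integral over the product
  have hI : ∀ s : ℝ, 0 < s → s ≤ 1 →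
      ∫ p, g (s⁻¹ • p.2 + p.1) * gam d π (p.2 + s • p.1) ∂μ
      = ∫ y, g (s⁻¹ • y) * gam d π y := by
    intro s hs hs1
    rw [integral_prod _ (hinteg s s hs.le hs1)]
    have : ∀ t : Fin d → ℝ, ∫ y, g (s⁻¹ • y + t) * gam d π (y + s • t)
        = ∫ y, g (s⁻¹ • y) * gam d π y := by
      intro t
      rw [← integral_add_right_eq_self (fun y => g (s⁻¹ • y) * gam d π y) (s • t)]
      simp only [smul_add, inv_smul_smul₀ hs.ne']
    simp only [this]
    simp
  -- rescaling
  have hscale : ∀ ε : ℝ, 0 < ε →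
      ε ^ ((d : ℝ) / 2) * ∫ x : Fin d → ℝ, g x * Real.exp (-ε * Real.pi * ∑ i, x i ^ 2)
      = ∫ y, g ((√ε)⁻¹ • y) * gam d π y := by
    intro ε hε
    have h := Measure.integral_comp_inv_smul_of_nonneg volume
      (fun x : Fin d → ℝ => g x * Real.exp (-ε * Real.pi * ∑ i, x i ^ 2)) (Real.sqrt_nonneg ε)
    have hp : ε ^ ((d : ℝ) / 2) = √ε ^ d := by
      rw [Real.sqrt_eq_rpow, ← Real.rpow_natCast, ← Real.rpow_mul hε.le]
      congr 1
      ring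
    rw [hp]
    simp only [Module.finrank_fin_fun, smul_eq_mul] at h
    rw [← h]
    congr 1
    funext y
    simp only [gam, Pi.smul_apply, smul_eq_mul, mul_pow, inv_pow, Real.sq_sqrt hε.le,
      ← Finset.mul_sum]
    congr 2
    field_simp
  -- dominated convergence
  have hDCT : Tendsto (fun s : ℝ => ∫ p, (g (s⁻¹ • p.2 + p.1) * gam d π (p.2 + s • p.1)
      - g (s⁻¹ • p.2 + p.1) * gam d π (p.2 + (0 : ℝ) • p.1)) ∂μ) (𝓝[>] 0) (𝓝 0) := by
    have hsm : ∀ᶠ s : ℝ in 𝓝[>] 0, 0 < s ∧ s ≤ 1 := by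
      filter_upwards [Ioc_mem_nhdsGT (zero_lt_one' ℝ)] with s hs using hs
    have h0 : 𝓝 (0 : ℝ) = 𝓝 (∫ p : (Fin d → ℝ) × (Fin d → ℝ), (0 : ℝ) ∂μ) := by
      rw [integral_zero]
    refine le_of_le_of_eq ?_ h0.symm
    change Tendsto _ _ _
    refine tendsto_integral_filter_of_dominated_convergence (fun p => M * B p + M * B p)
      ?_ ?_ ((hB.const_mul M).add (hB.const_mul M)) ?_
    · exact Eventually.of_forall fun s => ((hcont s s).sub (hcont s 0)).aestronglyMeasurable
    · filter_upwards [hsm] with s hs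
      filter_upwards [hbd s s hs.1.le hs.2, hbd s 0 le_rfl zero_le_one] with p h1 h2
      exact (norm_sub_le _ _).trans (add_le_add h1 h2)
    · refine Eventually.of_forall fun p => ?_
      have hc : Continuous fun s : ℝ => M * ‖gam d π (p.2 + s • p.1)
          - gam d π (p.2 + (0 : ℝ) • p.1)‖ := by fun_prop
      have ht := (hc.tendsto 0).mono_left (nhdsWithin_le_nhds (s := Set.Ioi 0))
      simp only [sub_self, norm_zero, mul_zero] at ht
      refine squeeze_zero_norm (fun s => ?_) ht
      rw [← mul_sub, norm_mul]
      exact mul_le_mul_of_nonneg_right (hM _) (norm_nonneg _)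
  have hsqrt : Tendsto (fun ε : ℝ => √ε) (𝓝[>] 0) (𝓝[>] 0) := by
    refine tendsto_nhdsWithin_iff.2 ⟨?_, ?_⟩
    · have := (Real.continuous_sqrt.tendsto 0).mono_left (nhdsWithin_le_nhds (s := Set.Ioi 0))
      simpa using this
    · filter_upwards [self_mem_nhdsWithin] with ε hε using Real.sqrt_pos.2 hε
  have hfin := (hDCT.comp hsqrt).add_const (∫ x in Q, g x)
  rw [zero_add] at hfin
  refine hfin.congr' ?_
  filter_upwards [Ioc_mem_nhdsGT (zero_lt_one' ℝ)] with ε hε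
  have hs : 0 < √ε := Real.sqrt_pos.2 hε.1
  have hs1 : √ε ≤ 1 := Real.sqrt_le_one.2 hε.2
  simp only [Function.comp]
  rw [integral_sub (hinteg _ _ hs.le hs1) (hinteg _ 0 le_rfl zero_le_one), hmean, hI _ hs hs1,
    hscale ε hε.1]
  ring
end
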